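/- arXiv:1302.0271 — 2 statements merged into one kernel-verified Lean document; each statement's English description precedes it below -/
import Mathlib

section
/- Let k ≥ 1 be an integer, α = (1+√(1+4/k))/2, β = kα+1, a_n = ⌊nα⌋, b_n = ⌊nβ⌋, and S̄_k = {(x,y) ∈ ℕ² : ∃ n ∈ ℕ, {x,y} = {a_n,b_n}}. Then no legal move of the ruleset Γ_k leads from a position in S̄_k to a position in S̄_k. -/
/-- α = (1 + √(1 + 4/k)) / 2 -/
noncomputable def alphaK (k : ℕ) : ℝ := (1 + Real.sqrt (1 + 4 / (k : ℝ))) / 2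

/-- β = k·α + 1 -/
noncomputable def betaK (k : ℕ) : ℝ := (k : ℝ) * alphaK k + 1

/-- a_n = ⌊n·α⌋ -/
noncomputable def aSeq (k n : ℕ) : ℤ := ⌊(n : ℝ) * alphaK k⌋

/-- b_n = ⌊n·β⌋ -/
noncomputable def bSeq (k n : ℕ) : ℤ := ⌊(n : ℝ) * betaK k⌋

/-- the pair (f^i_n, g^i_n): (f^i_0,g^i_0) = (0,i+1),
    (f^i_n, g^i_n) = (f^i_{n−1} + g^i_{n−1}, k·f^i_{n−1} + (k+1)·g^i_{n−1} + i). -/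
def fg (k i : ℕ) : ℕ → ℕ × ℕ
  | 0 => (0, i + 1)
  | n + 1 => ((fg k i n).1 + (fg k i n).2,
      k * (fg k i n).1 + (k + 1) * (fg k i n).2 + i)

/-- The moves of the ruleset Γ_k, from position `p` to position `q`
    (positions are pairs of natural numbers, so nonnegativity of the
    resulting coordinates is automatic from the additive formulation). -/
def GammaMove (k : ℕ) (p q : ℕ × ℕ) : Prop :=
  -- Type I: Nim moves
  (∃ n : ℕ, 1 ≤ n ∧
      ((q.1 + n = p.1 ∧ q.2 = p.2) ∨ (q.1 = p.1 ∧ q.2 + n = p.2))) ∨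
  -- Type II: extended diagonal moves, s,t ≥ 1 with |s−t| < k
  (∃ s t : ℕ, 1 ≤ s ∧ 1 ≤ t ∧ s < t + k ∧ t < s + k ∧
      ((q.1 + s = p.1 ∧ q.2 + t = p.2) ∨ (q.1 + t = p.1 ∧ q.2 + s = p.2))) ∨
  -- Type III: extra moves (f^i_n, g^i_n − 1) for 1 ≤ i ≤ k−1, n ≥ 1
  (∃ i n : ℕ, 1 ≤ i ∧ i + 1 ≤ k ∧ 1 ≤ n ∧
      ((q.1 + (fg k i n).1 = p.1 ∧ q.2 + ((fg k i n).2 - 1) = p.2) ∨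
       (q.1 + ((fg k i n).2 - 1) = p.1 ∧ q.2 + (fg k i n).1 = p.2)))

/-- S̄_k = {(x,y) : ∃ n, {x,y} = {a_n, b_n}} -/
def SbarK (k : ℕ) : Set (ℕ × ℕ) :=
  {p | ∃ n : ℕ, ((p.1 : ℤ) = aSeq k n ∧ (p.2 : ℤ) = bSeq k n) ∨
                ((p.1 : ℤ) = bSeq k n ∧ (p.2 : ℤ) = aSeq k n)}

theorem alpha_facts (k : ℕ) (hk : 1 ≤ k) :
    (k : ℝ) * alphaK k ^ 2 = k * alphaK k + 1 ∧ 1 < alphaK k ∧ (k : ℝ) * (alphaK k - 1) < 1 := by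
  have hk' : (1 : ℝ) ≤ k := by exact_mod_cast hk
  have hk0 : (0 : ℝ) < k := by linarith
  have hs : Real.sqrt (1 + 4 / (k : ℝ)) ^ 2 = 1 + 4 / (k : ℝ) :=
    Real.sq_sqrt (by positivity)
  have hs0 := Real.sqrt_nonneg (1 + 4 / (k : ℝ))
  have hs1 : (1 : ℝ) < Real.sqrt (1 + 4 / (k : ℝ)) := by
    apply Real.lt_sqrt_of_sq_lt
    have : 0 < 4 / (k : ℝ) := by positivity
    linarith
  have h1 : (k : ℝ) * alphaK k ^ 2 = k * alphaK k + 1 := by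
    unfold alphaK
    have h2 : (k : ℝ) * Real.sqrt (1 + 4 / (k : ℝ)) ^ 2 = k + 4 := by
      rw [hs]; field_simp
    nlinarith
  have h2 : 1 < alphaK k := by unfold alphaK; linarith
  refine ⟨h1, h2, ?_⟩
  have : (k : ℝ) * (alphaK k - 1) * alphaK k = 1 := by linarith
  nlinarith

theorem alpha_irr (k : ℕ) (hk : 1 ≤ k) (m : ℕ) (x : ℤ) (h : (m : ℝ) * alphaK k = x) : m = 0 := by
  obtain ⟨h1, h2, h3⟩ := alpha_facts k hk
  by_contra hm
  have hm1 : (1 : ℤ) ≤ m := by omega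
  have hk1 : (1 : ℤ) ≤ k := by exact_mod_cast hk
  have e : (k : ℤ) * x ^ 2 = k * m * x + m ^ 2 := by
    have : (k : ℝ) * x ^ 2 = k * m * x + m ^ 2 := by
      rw [← h]; linear_combination (m : ℝ) ^ 2 * h1
    exact_mod_cast this
  have e2 : (2 * k * x - k * m) ^ 2 = ((k : ℤ) ^ 2 + 4 * k) * m ^ 2 := by
    linear_combination 4 * (k : ℤ) * e
  have hd : (m : ℤ) ∣ 2 * k * x - k * m := by
    have : (m : ℤ) ^ 2 ∣ (2 * k * x - k * m) ^ 2 := ⟨(k : ℤ) ^ 2 + 4 * k, by linear_combination e2⟩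
    exact (Int.pow_dvd_pow_iff (by norm_num)).1 this
  obtain ⟨c, hc⟩ := hd
  rw [hc] at e2
  have e3 : c ^ 2 = (k : ℤ) ^ 2 + 4 * k := by
    have hm2 : ((m : ℤ) ^ 2) ≠ 0 := by positivity
    apply mul_left_cancel₀ hm2
    linear_combination e2
  have e4 : |c| ^ 2 = (k : ℤ) ^ 2 + 4 * k := by rw [sq_abs]; exact e3
  have := abs_nonneg c
  have l1 : (k : ℤ) + 1 < |c| := by nlinarith
  have l2 : |c| < (k : ℤ) + 2 := by nlinarith
  omega

theorem ab_facts (k : ℕ) (hk : 1 ≤ k) (n : ℕ) : ∃ r : ℤ,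
    bSeq k n = k * aSeq k n + n + r ∧ 0 ≤ r ∧ r + 1 ≤ k ∧
    (r : ℝ) ≤ k * (n * alphaK k - aSeq k n) ∧ (k : ℝ) * (n * alphaK k - aSeq k n) < r + 1 ∧
    (aSeq k n : ℝ) ≤ n * alphaK k ∧ (n : ℝ) * alphaK k < aSeq k n + 1 ∧ (n : ℤ) ≤ aSeq k n := by
  obtain ⟨h1, h2, h3⟩ := alpha_facts k hk
  have hk' : (1 : ℝ) ≤ k := by exact_mod_cast hk
  have ha : (aSeq k n : ℝ) ≤ n * alphaK k := Int.floor_le _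
  have ha' : (n : ℝ) * alphaK k < aSeq k n + 1 := Int.lt_floor_add_one _
  have hn : (0 : ℝ) ≤ n := by positivity
  have r1 := Int.floor_le ((k : ℝ) * (n * alphaK k - aSeq k n))
  have r2 := Int.lt_floor_add_one ((k : ℝ) * (n * alphaK k - aSeq k n))
  refine ⟨⌊(k : ℝ) * (n * alphaK k - aSeq k n)⌋, ?_, ?_, ?_, r1, r2, ha, ha', ?_⟩
  · unfold bSeq betaK
    rw [Int.floor_eq_iff]
    push_cast
    constructor <;> nlinarith
  · apply Int.floor_nonneg.2
    apply mul_nonneg <;> linarith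
  · apply Int.add_one_le_of_lt
    rw [Int.floor_lt]
    push_cast
    nlinarith
  · apply Int.le_floor.2
    push_cast
    nlinarith

theorem a_mono (k : ℕ) {l m : ℕ} (h : l ≤ m) (hk : 1 ≤ k) : aSeq k l ≤ aSeq k m := by
  obtain ⟨h1, h2, h3⟩ := alpha_facts k hk
  apply Int.floor_le_floor
  have : (l : ℝ) ≤ m := by exact_mod_cast h
  nlinarith

theorem a_lt (k : ℕ) {l m : ℕ} (h : l < m) (hk : 1 ≤ k) : aSeq k l < aSeq k m := by
  obtain ⟨h1, h2, h3⟩ := alpha_facts k hk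
  apply Int.lt_of_add_one_le
  apply Int.le_floor.2
  have : (l : ℝ) + 1 ≤ m := by exact_mod_cast h
  have ha : (aSeq k l : ℝ) ≤ l * alphaK k := Int.floor_le _
  push_cast
  nlinarith

theorem t2 (k : ℕ) (hk : 1 ≤ k) {l m : ℕ} (h : l < m) :
    aSeq k m - aSeq k l + k ≤ bSeq k m - bSeq k l := by
  obtain ⟨h1, h2, h3⟩ := alpha_facts k hk
  have hA := a_lt k h hk
  obtain ⟨r, e, r0, r1, r2, r3, r4, r5, r6⟩ := ab_facts k hk m
  obtain ⟨s, e', s0, s1, s2, s3, s4, s5, s6⟩ := ab_facts k hk l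
  have hk1 : (1 : ℤ) ≤ k := by exact_mod_cast hk
  have hlm : (l : ℤ) + 1 ≤ m := by exact_mod_cast h
  have hk' : (1 : ℝ) ≤ k := by exact_mod_cast hk
  rw [e, e']
  by_cases h2 : aSeq k l + 2 ≤ aSeq k m
  · nlinarith
  · have hA1 : aSeq k m = aSeq k l + 1 := by omega
    have : (s : ℝ) < r + 1 := by
      have hlm' : (l : ℝ) + 1 ≤ m := by exact_mod_cast h
      have : (l : ℝ) * alphaK k + 1 ≤ m * alphaK k := by nlinarith
      rw [hA1] at r3
      push_cast at r3
      nlinarith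
    have : s < r + 1 := by exact_mod_cast this
    rw [hA1]
    nlinarith

theorem t1c (k : ℕ) (hk : 1 ≤ k) {m n : ℕ} (h : aSeq k m = bSeq k n) : m = 0 ∧ n = 0 := by
  obtain ⟨h1, h2, h3⟩ := alpha_facts k hk
  have hk' : (1 : ℝ) ≤ k := by exact_mod_cast hk
  have a1 : (aSeq k m : ℝ) ≤ m * alphaK k := Int.floor_le _
  have a2 : (m : ℝ) * alphaK k < aSeq k m + 1 := Int.lt_floor_add_one _
  have b1 : (bSeq k n : ℝ) ≤ n * betaK k := Int.floor_le _
  have b2 : (n : ℝ) * betaK k < bSeq k n + 1 := Int.lt_floor_add_one _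
  rw [← h] at b1 b2
  unfold betaK at b1 b2
  generalize aSeq k m = x at *
  set α := alphaK k with hα
  have hb : 0 < k * α + 1 := by nlinarith
  have hP : (x : ℝ) * (α * (k * α + 1)) = x * (k * α + 1) + x * α := by
    linear_combination (x : ℝ) * h1
  have hx1 : (x : ℝ) * (α * (k * α + 1)) ≤ (m + n) * (α * (k * α + 1)) := by
    have e1 : (x : ℝ) * (k * α + 1) ≤ m * α * (k * α + 1) :=
      mul_le_mul_of_nonneg_right a1 hb.le
    have e2 : (x : ℝ) * α ≤ n * (k * α + 1) * α :=
      mul_le_mul_of_nonneg_right b1 (by linarith)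
    linarith
  have hx2 : (m + n) * (α * (k * α + 1)) < ((x : ℝ) + 1) * (α * (k * α + 1)) := by
    have e1 : m * α * (k * α + 1) < ((x : ℝ) + 1) * (k * α + 1) :=
      mul_lt_mul_of_pos_right a2 hb
    have e2 : n * (k * α + 1) * α < ((x : ℝ) + 1) * α :=
      mul_lt_mul_of_pos_right b2 (by linarith)
    linarith
  have hp : 0 < α * (k * α + 1) := by positivity
  have y1 := le_of_mul_le_mul_right hx1 hp
  have y2 := lt_of_mul_lt_mul_right hx2 hp.le
  have y1' : x ≤ m + n := by exact_mod_cast y1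
  have y2' : (m : ℤ) + n < x + 1 := by exact_mod_cast y2
  have hx : x = m + n := by omega
  have hxr : (x : ℝ) = m + n := by exact_mod_cast hx
  have hm : (m : ℝ) * α = x := by
    apply le_antisymm _ a1
    by_contra hc
    push Not at hc
    have e1 : (x : ℝ) * (k * α + 1) < m * α * (k * α + 1) :=
      mul_lt_mul_of_pos_right hc (by nlinarith)
    have e2 : (x : ℝ) * α ≤ n * (k * α + 1) * α :=
      mul_le_mul_of_nonneg_right b1 (by linarith)
    have e3 : (x : ℝ) * (α * (k * α + 1)) = (m + n) * (α * (k * α + 1)) := by rw [hxr]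
    linarith
  have m0 := alpha_irr k hk m x hm
  subst m0
  have : (x : ℝ) = 0 := by rw [← hm]; simp
  refine ⟨rfl, ?_⟩
  have : x = 0 := by exact_mod_cast this
  omega

theorem fg_facts (k i n : ℕ) (hi : 1 ≤ i) (hik : i + 1 ≤ k) :
    (i : ℝ) * alphaK k < ((fg k i n).2 : ℝ) - k * alphaK k * (fg k i n).1 ∧
    ((fg k i n).2 : ℝ) - k * alphaK k * (fg k i n).1 ≤ i + 1 := by
  obtain ⟨h1, h2, h3⟩ := alpha_facts k (by omega)
  have hi' : (1 : ℝ) ≤ i := by exact_mod_cast hi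
  have hik' : (i : ℝ) + 1 ≤ k := by exact_mod_cast hik
  have hi2 : (i : ℝ) * alphaK k < i + 1 := by nlinarith
  induction n with
  | zero => simp [fg]; linarith
  | succ n ih =>
    simp only [fg]
    push_cast
    set α := alphaK k
    set f : ℝ := ((fg k i n).1 : ℝ)
    set g : ℝ := ((fg k i n).2 : ℝ)
    have key : k * f + (k + 1) * g + i - k * α * (f + g) - i * α
        = (k + 1 - k * α) * (g - k * α * f - i * α) := by
      linear_combination (-(k : ℝ) * f - i) * h1
    have c0 : 0 < k + 1 - k * α := by linarith
    have c1 : k + 1 - k * α < 1 := by nlinarith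
    have p1 := mul_pos c0 (sub_pos.2 ih.1)
    have p2 : (k + 1 - k * α) * (g - k * α * f - i * α) ≤ 1 * (g - k * α * f - i * α) :=
      mul_le_mul_of_nonneg_right c1.le (sub_pos.2 ih.1).le
    have := ih.2
    constructor <;> linarith

theorem fg_facts' (k i n : ℕ) (hi : 1 ≤ i) (hik : i + 1 ≤ k) (hn : 1 ≤ n) :
    ((fg k i n).2 : ℝ) - k * alphaK k * (fg k i n).1 < i + 1 ∧ 1 ≤ (fg k i n).1 ∧
    (fg k i n).1 + 2 ≤ (fg k i n).2 := by
  obtain ⟨h1, h2, h3⟩ := alpha_facts k (by omega)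
  have hi' : (1 : ℝ) ≤ i := by exact_mod_cast hi
  have hik' : (i : ℝ) + 1 ≤ k := by exact_mod_cast hik
  have hi2 : (i : ℝ) * alphaK k < i + 1 := by nlinarith
  obtain ⟨n, rfl⟩ : ∃ j, n = j + 1 := ⟨n - 1, by omega⟩
  obtain ⟨p, q⟩ := fg_facts k i n hi hik
  have hg : 1 ≤ (fg k i n).2 := by
    by_contra hc
    have : (fg k i n).2 = 0 := by omega
    rw [this] at p
    have : (0 : ℝ) ≤ k * alphaK k * (fg k i n).1 := by positivity
    push_cast at p
    nlinarith
  refine ⟨?_, ?_, ?_⟩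
  · simp only [fg]
    push_cast
    set α := alphaK k
    set f : ℝ := ((fg k i n).1 : ℝ)
    set g : ℝ := ((fg k i n).2 : ℝ)
    have key : k * f + (k + 1) * g + i - k * α * (f + g) - i * α
        = (k + 1 - k * α) * (g - k * α * f - i * α) := by
      linear_combination (-(k : ℝ) * f - i) * h1
    have c1 : k + 1 - k * α < 1 := by nlinarith
    have p2 : (k + 1 - k * α) * (g - k * α * f - i * α) < 1 * (g - k * α * f - i * α) :=
      mul_lt_mul_of_pos_right c1 (sub_pos.2 p)
    linarith
  · simp only [fg]; omega
  · simp only [fg]; nlinarith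

theorem t3dir (k i n : ℕ) (hi : 1 ≤ i) (hik : i + 1 ≤ k) (hn : 1 ≤ n) (l m : ℕ)
    (hf : aSeq k m - aSeq k l = (fg k i n).1) (hg : bSeq k m - bSeq k l = (fg k i n).2 - 1) :
    False := by
  have hk : 1 ≤ k := by omega
  obtain ⟨h1, h2, h3⟩ := alpha_facts k hk
  obtain ⟨p, -⟩ := fg_facts k i n hi hik
  obtain ⟨q, -, -⟩ := fg_facts' k i n hi hik hn
  obtain ⟨r, e, r0, r1, r2, r3, r4, r5, r6⟩ := ab_facts k hk m
  obtain ⟨s, e', s0, s1, s2, s3, s4, s5, s6⟩ := ab_facts k hk l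
  have hi' : (1 : ℝ) ≤ i := by exact_mod_cast hi
  have hik' : (i : ℝ) + 1 ≤ k := by exact_mod_cast hik
  rw [e, e'] at hg
  have hf' : (aSeq k m : ℝ) - aSeq k l = (fg k i n).1 := by exact_mod_cast hf
  have hg' : (k * aSeq k m + m + r : ℝ) - (k * aSeq k l + l + s) = (fg k i n).2 - 1 := by
    exact_mod_cast hg
  set α := alphaK k
  generalize ((fg k i n).1 : ℝ) = f at *
  generalize ((fg k i n).2 : ℝ) = g at *
  obtain ⟨θ, hθ⟩ : ∃ θ : ℝ, θ = (m * α - aSeq k m) - (l * α - aSeq k l) := ⟨_, rfl⟩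
  have key : θ + α * (r - s) = α * (g - k * α * f - 1) := by
    rw [hθ]
    have : (k : ℝ) * f + (m - l) + (r - s) = g - 1 := by rw [← hf']; linarith
    have hg2 : g = (k : ℝ) * f + (m - l) + (r - s) + 1 := by linarith
    rw [hg2, ← hf']
    linear_combination (α * 0 + ((aSeq k m : ℝ) - aSeq k l)) * h1
  have b1 : k * θ < r - s + 1 := by rw [hθ]; linarith
  have b2 : (r : ℝ) - s - 1 < k * θ := by rw [hθ]; linarith
  by_cases hR : (i : ℤ) ≤ r - s
  · have hR' : (i : ℝ) ≤ r - s := by exact_mod_cast hR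
    have : θ < 0 := by nlinarith
    nlinarith
  · have hR' : (r : ℝ) - s + 1 ≤ i := by
      have : r - s + 1 ≤ (i : ℤ) := by omega
      exact_mod_cast this
    have t : α * (i * (α - 1)) < θ := by nlinarith
    have t2 : k * (α * (i * (α - 1))) < k * θ := mul_lt_mul_of_pos_left t (by linarith)
    have t3 : k * (α * (i * (α - 1))) = i := by linear_combination (i : ℝ) * h1
    linarith

theorem t3cross (k i n : ℕ) (hi : 1 ≤ i) (hik : i + 1 ≤ k) (hn : 1 ≤ n) (l m : ℕ)
    (hf : aSeq k m - bSeq k l = (fg k i n).1) (hg : bSeq k m - aSeq k l = (fg k i n).2 - 1) :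
    False := by
  have hk : 1 ≤ k := by omega
  rcases Nat.eq_zero_or_pos l with h0 | hl
  · subst h0
    apply t3dir k i n hi hik hn 0 m
    · simpa [aSeq, bSeq] using hf
    · simpa [aSeq, bSeq] using hg
  obtain ⟨h1, h2, h3⟩ := alpha_facts k hk
  obtain ⟨q, -, -⟩ := fg_facts' k i n hi hik hn
  obtain ⟨r, e, r0, r1, r2, r3, r4, r5, r6⟩ := ab_facts k hk m
  obtain ⟨s, e', s0, s1, s2, s3, s4, s5, s6⟩ := ab_facts k hk l
  have hi' : (1 : ℝ) ≤ i := by exact_mod_cast hi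
  have hik' : (i : ℝ) + 1 ≤ k := by exact_mod_cast hik
  have hl' : (1 : ℝ) ≤ l := by exact_mod_cast hl
  rw [e'] at hf
  rw [e] at hg
  have hf' : (aSeq k m : ℝ) - (k * aSeq k l + l + s) = (fg k i n).1 := by exact_mod_cast hf
  have hg' : (k * aSeq k m + m + r : ℝ) - aSeq k l = (fg k i n).2 - 1 := by
    exact_mod_cast hg
  have s0' : (0 : ℝ) ≤ s := by exact_mod_cast s0
  have r0' : (0 : ℝ) ≤ r := by exact_mod_cast r0
  have s6' : (l : ℝ) ≤ aSeq k l := by exact_mod_cast s6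
  set α := alphaK k
  generalize ((fg k i n).1 : ℝ) = f at *
  generalize ((fg k i n).2 : ℝ) = g at *
  generalize (aSeq k m : ℝ) = A at *
  generalize (aSeq k l : ℝ) = B at *
  -- b_m ≥ kα a_m
  have c1 : k * α * A ≤ k * A + m := by
    have : α * (k * α * A) ≤ α * (k * A + m) := by
      have : α * (k * α * A) = α * (k * A) + A := by linear_combination A * h1
      nlinarith
    exact le_of_mul_le_mul_left this (by linarith)
  have c2 : k * (k * B + l + s) ≤ k * α * (k * B + l + s) := by
    have : 0 ≤ k * B + l + s := by nlinarith
    nlinarith [mul_nonneg (by linarith : (0 : ℝ) ≤ k) this]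
  have c3 : g - 1 - k * α * f < i := by linarith
  have c4 : g - 1 - k * α * f ≥ k * (k * B + l + s) - B := by
    rw [← hg', ← hf']; linarith
  have c5 : k * (k * B + l + s) - B ≥ k := by
    have q1 := mul_nonneg (by linarith : (0 : ℝ) ≤ k) s0'
    have q2 := mul_nonneg (by linarith : (0 : ℝ) ≤ k) (sub_nonneg.2 hl')
    have q3 := mul_nonneg (by nlinarith : (0 : ℝ) ≤ k * k - 1) (by linarith : (0 : ℝ) ≤ B)
    linarith
  linarith

theorem b_ge (k : ℕ) (hk : 1 ≤ k) (m : ℕ) : aSeq k m ≤ bSeq k m ∧ 0 ≤ aSeq k m ∧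
    (1 ≤ m → aSeq k m + k ≤ bSeq k m) := by
  obtain ⟨r, e, r0, r1, r2, r3, r4, r5, r6⟩ := ab_facts k hk m
  have hk1 : (1 : ℤ) ≤ k := by exact_mod_cast hk
  refine ⟨?_, by omega, fun h => ?_⟩
  · rw [e]; nlinarith
  · have : (1 : ℤ) ≤ m := by exact_mod_cast h
    rw [e]; nlinarith

/-- One-sided version, all in integers. -/
theorem core (k : ℕ) (hk : 1 ≤ k) (p q : ℕ × ℕ) (m : ℕ) (h1 : (p.1 : ℤ) = aSeq k m)
    (h2 : (p.2 : ℤ) = bSeq k m) (hmove : GammaMove k p q) (hq : q ∈ SbarK k) : False := by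
  obtain ⟨p1, p2⟩ := p
  obtain ⟨q1, q2⟩ := q
  obtain ⟨l, hl⟩ := hq
  simp only [GammaMove] at *
  have z1 : aSeq k 0 = 0 := by simp [aSeq]
  have z2 : bSeq k 0 = 0 := by simp [bSeq]
  have gm := b_ge k hk m
  have gl := b_ge k hk l
  have tri : l < m ∨ m = l ∨ m < l := by omega
  have hc1 := @t1c k hk m l
  have hc2 := @t1c k hk l m
  have d1 := @t2 k hk l m
  have d2 := @t2 k hk m l
  have d3 := fun h => @a_lt k l m h hk
  have d4 := fun h => @a_lt k m l h hk
  have hm0 : m = 0 ∨ 1 ≤ m := by omega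
  rcases hmove with ⟨n, hn, hmv⟩ | ⟨s, t, hs, ht, hst, hts, hmv⟩ | ⟨i, n, hi, hik, hn, hmv⟩
  · rcases hl with ⟨e1, e2⟩ | ⟨e1, e2⟩
    · rcases tri with h | h | h
      · have := d1 h; have := d3 h; omega
      · subst h; omega
      · have := d2 h; have := d4 h; omega
    · rcases hmv with ⟨v1, v2⟩ | ⟨v1, v2⟩
      · obtain ⟨rfl, rfl⟩ := hc2 (by omega)
        omega
      · obtain ⟨rfl, rfl⟩ := hc1 (by omega)
        omega
  · have hm : 1 ≤ m := by
      rcases hm0 with h | h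
      · subst h; omega
      · exact h
    have := gm.2.2 hm
    rcases hl with ⟨e1, e2⟩ | ⟨e1, e2⟩
    · rcases tri with h | h | h
      · have := d1 h; omega
      · subst h; omega
      · have := d2 h; have := d4 h; omega
    · omega
  · have ff := fg_facts' k i n hi hik hn
    rcases hl with ⟨e1, e2⟩ | ⟨e1, e2⟩
    · rcases hmv with ⟨v1, v2⟩ | ⟨v1, v2⟩
      · exact t3dir k i n hi hik hn l m (by omega) (by omega)
      · rcases tri with h | h | h
        · have := d1 h; omega
        · subst h; omega
        · have := d2 h; have := d4 h; omega
    · rcases hmv with ⟨v1, v2⟩ | ⟨v1, v2⟩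
      · exact t3cross k i n hi hik hn l m (by omega) (by omega)
      · omega

theorem move_swap (k : ℕ) (p q : ℕ × ℕ) (h : GammaMove k p q) : GammaMove k p.swap q.swap := by
  simp only [GammaMove, Prod.fst_swap, Prod.snd_swap] at *
  rcases h with ⟨n, hn, h⟩ | ⟨s, t, hs, ht, hst, hts, h⟩ | ⟨i, n, hi, hik, hn, h⟩
  · exact Or.inl ⟨n, hn, by tauto⟩
  · exact Or.inr (Or.inl ⟨s, t, hs, ht, hst, hts, by tauto⟩)
  · exact Or.inr (Or.inr ⟨i, n, hi, hik, hn, by tauto⟩)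

/-- No legal move of the ruleset Γ_k leads from a position in S̄_k
    to a position in S̄_k. -/
theorem no_move_P_to_P (k : ℕ) (hk : 1 ≤ k) (p q : ℕ × ℕ)
    (hp : p ∈ SbarK k) (hmove : GammaMove k p q) : q ∉ SbarK k := by
  intro hq
  obtain ⟨m, ⟨h1, h2⟩ | ⟨h1, h2⟩⟩ := hp
  · exact core k hk p q m h1 h2 hmove hq
  · refine core k hk p.swap q.swap m h2 h1 (move_swap k p q hmove) ?_
    obtain ⟨l, hl⟩ := hq
    exact ⟨l, by simp only [Prod.fst_swap, Prod.snd_swap]; tauto⟩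
end

section
/- Let k ≥ 1 be an integer, α = (1+√(1+4/k))/2, β = kα+1, a_n = ⌊nα⌋, b_n = ⌊nβ⌋, and S̄_k = {(x,y) ∈ ℕ² : ∃ n ∈ ℕ, {x,y} = {a_n,b_n}}. Then from every position (x,y) ∈ ℕ² with (x,y) ∉ S̄_k there exists a legal move of the ruleset Γ_k to some position in S̄_k. -/
lemma alpha_sq (k : ℕ) (hk : 1 ≤ k) : (k:ℝ) * alphaK k ^ 2 = k * alphaK k + 1 := by
  have hk' : (0:ℝ) < k := by exact_mod_cast hk
  have h := Real.sq_sqrt (show (0:ℝ) ≤ 1 + 4 / k by positivity)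
  unfold alphaK
  have h2 : (k:ℝ) * (Real.sqrt (1 + 4 / (k : ℝ)))^2 = k + 4 := by rw [h]; field_simp
  linear_combination h2 / 4

lemma alpha_gt (k : ℕ) (hk : 1 ≤ k) : 1 < alphaK k := by
  have hk' : (0:ℝ) < k := by exact_mod_cast hk
  have : 1 < Real.sqrt (1 + 4 / (k:ℝ)) := by
    rw [Real.lt_sqrt (by norm_num)]
    have : (0:ℝ) < 4 / k := by positivity
    linarith
  unfold alphaK; linarith

lemma alpha_del (k : ℕ) (hk : 1 ≤ k) : (k:ℝ) * (alphaK k - 1) < 1 := by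
  have hk' : (0:ℝ) < k := by exact_mod_cast hk
  have h1 := alpha_sq k hk
  have h2 := alpha_gt k hk
  nlinarith [mul_pos hk' (sub_pos.2 h2)]

lemma alpha_irr_s2 (k : ℕ) (hk : 1 ≤ k) : Irrational (alphaK k) := by
  have hk' : (0:ℝ) < k := by exact_mod_cast hk
  have hs : Irrational (Real.sqrt ((k^2 + 4*k : ℕ) : ℝ)) := by
    rw [irrational_sqrt_natCast_iff]
    rintro ⟨r, hr⟩
    have h1 : k + 1 < r + 0 := by nlinarith
    have h2 : r < k + 2 := by nlinarith
    omega
  rintro ⟨q, hq⟩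
  apply hs
  refine ⟨k * (2 * q - 1), ?_⟩
  symm
  rw [Real.sqrt_eq_iff_mul_self_eq_of_pos]
  · push_cast
    rw [hq]
    linear_combination (4 * (k:ℝ)) * alpha_sq k hk
  · push_cast
    rw [hq]
    have := alpha_gt k hk
    have : 0 < 2 * alphaK k - 1 := by linarith
    positivity

lemma cover (k : ℕ) (hk : 1 ≤ k) (x : ℕ) : ∃ n : ℕ, (x:ℤ) = aSeq k n ∨ (x:ℤ) = bSeq k n := by
  rcases Nat.eq_zero_or_pos x with rfl | hx
  · exact ⟨0, Or.inl (by simp [aSeq])⟩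
  have h1 := alpha_sq k hk
  have h2 := alpha_gt k hk
  have hk' : (0:ℝ) < k := by exact_mod_cast hk
  have hc : (alphaK k).HolderConjugate (betaK k) := by
    rw [Real.holderConjugate_iff]
    refine ⟨h2, ?_⟩
    have : betaK k = k * alphaK k ^ 2 := by rw [h1, betaK]
    have hb : 0 < betaK k := by unfold betaK; positivity
    have ha : 0 < alphaK k := by linarith
    field_simp
    unfold betaK
    linarith
  have := (alpha_irr_s2 k hk).beattySeq_symmDiff_beattySeq_pos hc
  have hm : (x:ℤ) ∈ {n : ℤ | 0 < n} := by simpa using hx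
  rw [← this] at hm
  rcases hm with ⟨⟨m, hm, hme⟩, -⟩ | ⟨⟨m, hm, hme⟩, -⟩
  · refine ⟨m.toNat, Or.inl ?_⟩
    rw [← hme, aSeq, beattySeq]
    lift m to ℕ using hm.le
    simp
  · refine ⟨m.toNat, Or.inr ?_⟩
    rw [← hme, bSeq, beattySeq]
    lift m to ℕ using hm.le
    simp

lemma descent (k : ℕ) (hk : 1 ≤ k) (i : ℕ) (hi : 1 ≤ i) (r : ℕ) : ∀ f : ℤ, 1 ≤ r →
    0 ≤ (k:ℝ) * (r * alphaK k - f) - i →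
    (k:ℝ) * (r * alphaK k - f) - i < k * alphaK k - i →
    ∃ j : ℕ, 1 ≤ j ∧ ((fg k i j).2 : ℤ) - k * (fg k i j).1 - i ≤ r ∧ ((fg k i j).1 : ℤ) ≤ f ∧
      (k:ℝ) * ((((fg k i j).2 : ℝ) - k * (fg k i j).1 - i) * alphaK k - (fg k i j).1) - i
        ≤ (k:ℝ) * (r * alphaK k - f) - i := by
  induction r using Nat.strong_induction_on with
  | _ r ih =>
  intro f hr h0 h1
  have hsq := alpha_sq k hk
  have hgt := alpha_gt k hk
  have hdel := alpha_del k hk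
  have hk' : (0:ℝ) < k := by exact_mod_cast hk
  have hk1 : (1:ℝ) ≤ k := by exact_mod_cast hk
  have hr' : (1:ℝ) ≤ r := by exact_mod_cast hr
  have hi' : (1:ℝ) ≤ i := by exact_mod_cast hi
  generalize alphaK k = α at *
  have hf : ((r:ℝ) - 1) * α < f := by
    have : (k:ℝ) * ((r - 1) * α) < k * f := by linarith
    exact lt_of_mul_lt_mul_left this hk'.le
  have hfr : (r:ℤ) ≤ f := by
    have : ((r:ℝ) - 1) < f := by nlinarith
    have : (r:ℤ) - 1 < f := by exact_mod_cast this
    omega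
  have hfr' : (r:ℝ) ≤ f := by exact_mod_cast hfr
  have hri : i + 1 ≤ r := by
    by_contra hcon
    have hle : (r:ℝ) ≤ i := by exact_mod_cast (show r ≤ i by omega)
    nlinarith [mul_le_mul_of_nonneg_left hfr' hk'.le]
  by_cases hE : (k:ℝ) * ((i+1) * α - (i+1)) - i ≤ (k:ℝ) * (r * α - f) - i
  · refine ⟨1, le_rfl, ?_, ?_, ?_⟩
    · simp only [fg]; push_cast; ring_nf; omega
    · simp only [fg]; push_cast; omega
    · simp only [fg]; push_cast
      refine le_trans (le_of_eq ?_) hE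
      ring
  · push Not at hE
    obtain ⟨r', hr'e⟩ : ∃ r' : ℤ, r' = (k+1) * r - k * f - i := ⟨_, rfl⟩
    have hr'R : (r':ℝ) = (k+1) * r - k * f - i := by rw [hr'e]; push_cast; ring
    have hid : (k:ℝ) * (r' * α - ((f - r : ℤ):ℝ)) - i = (k * α + 1) * ((k:ℝ) * (r * α - f) - i) := by
      rw [hr'R]; push_cast
      linear_combination (-(k:ℝ) * r) * hsq
    have hβ : 0 < (k:ℝ) * α + 1 := by positivity
    have e0 : 0 ≤ (k:ℝ) * (r' * α - ((f - r : ℤ):ℝ)) - i := by rw [hid]; positivity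
    have e1 : (k:ℝ) * (r' * α - ((f - r : ℤ):ℝ)) - i < k * α - i := by
      rw [hid]
      have := mul_lt_mul_of_pos_left hE hβ
      refine lt_of_lt_of_eq this ?_
      linear_combination ((k:ℝ) * (i+1)) * hsq
    have hpos : 1 ≤ r' := by
      by_contra hcon
      have : (r':ℝ) ≤ 0 := by exact_mod_cast (show r' ≤ 0 by omega)
      push_cast at e0
      have h3 : (r':ℝ) * α ≤ 0 := mul_nonpos_of_nonpos_of_nonneg this (by linarith)
      nlinarith
    have hlt : r' < r := by
      have : (0:ℤ) ≤ k * (f - r) := mul_nonneg (by positivity) (by omega)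
      have : r' = r - k * (f - r) - i := by rw [hr'e]; ring
      omega
    lift r' to ℕ using by omega
    obtain ⟨j, hj, j1, j2, j3⟩ := ih r' (by omega) (f - r) (by omega)
      (by exact_mod_cast e0) (by exact_mod_cast e1)
    refine ⟨j+1, by omega, ?_, ?_, ?_⟩
    · simp only [fg]; push_cast
      have := mul_le_mul_of_nonneg_left j2 (show (0:ℤ) ≤ k by positivity)
      linarith
    · simp only [fg]; push_cast
      have := mul_le_mul_of_nonneg_left j2 (show (0:ℤ) ≤ k by positivity)
      linarith
    · simp only [fg]
      generalize (fg k i j).1 = F at *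
      generalize (fg k i j).2 = G at *
      rw [Int.cast_natCast] at hid
      rw [hid] at j3
      refine le_of_mul_le_mul_left (le_trans (le_of_eq ?_) j3) hβ
      push_cast
      linear_combination ((k:ℝ) * G) * hsq

lemma fg_inv (k : ℕ) (hk : 1 ≤ k) (i : ℕ) (hi : i ≤ k) (j : ℕ) :
    ∃ R : ℕ, (fg k i j).2 = R + k * (fg k i j).1 + i ∧
      0 ≤ (k:ℝ) * (R * alphaK k - (fg k i j).1) - i := by
  have hsq := alpha_sq k hk
  have hgt := alpha_gt k hk
  have hk' : (0:ℝ) < k := by exact_mod_cast hk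
  have hi' : (i:ℝ) ≤ k := by exact_mod_cast hi
  induction j with
  | zero =>
    refine ⟨1, by simp [fg]; ring, ?_⟩
    simp only [fg]; push_cast; nlinarith
  | succ j ih =>
    obtain ⟨R, h1, h2⟩ := ih
    refine ⟨(fg k i j).2, by simp only [fg]; ring, ?_⟩
    simp only [fg]
    rw [h1]
    generalize (fg k i j).1 = F at *
    have hβ : 0 < (k:ℝ) * alphaK k + 1 := by positivity
    refine nonneg_of_mul_nonneg_right (le_of_le_of_eq h2 ?_) hβ
    push_cast
    linear_combination (-(k:ℝ) * (R + k * F + i)) * hsq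

lemma move_half (k : ℕ) (hk : 1 ≤ k) (x y : ℕ) (hxy : x ≤ y) (hp : (x, y) ∉ SbarK k) :
    ∃ q : ℕ × ℕ, GammaMove k (x, y) q ∧ q ∈ SbarK k := by
  have hsq := alpha_sq k hk
  have hgt := alpha_gt k hk
  have hdel := alpha_del k hk
  have hcov := cover k hk x
  have hk' : (0:ℝ) < k := by exact_mod_cast hk
  have hk1 : (1:ℝ) ≤ k := by exact_mod_cast hk
  have hdes := descent k hk
  have hinv := fg_inv k hk
  have ha0 : ∀ n, 0 ≤ aSeq k n := fun n => Int.floor_nonneg.2 (by positivity)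
  have hb0 : ∀ n, 0 ≤ bSeq k n := fun n => Int.floor_nonneg.2 (by unfold betaK; positivity)
  have hal : ∀ n : ℕ, (aSeq k n : ℝ) ≤ n * alphaK k := fun n => Int.floor_le _
  have hau : ∀ n : ℕ, n * alphaK k < (aSeq k n : ℝ) + 1 := fun n => Int.lt_floor_add_one _
  have hbl : ∀ n : ℕ, (bSeq k n : ℝ) ≤ n * (k * alphaK k + 1) := fun n => Int.floor_le _
  have hbu : ∀ n : ℕ, n * (k * alphaK k + 1) < (bSeq k n : ℝ) + 1 :=
    fun n => Int.lt_floor_add_one _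
  have haeq : ∀ (n : ℕ) (z : ℤ), (z:ℝ) ≤ n * alphaK k → n * alphaK k < z + 1 → aSeq k n = z :=
    fun n z h1 h2 => Int.floor_eq_iff.2 ⟨h1, h2⟩
  have hbeq : ∀ (n : ℕ) (z : ℤ), (z:ℝ) ≤ n * (k * alphaK k + 1) →
      n * (k * alphaK k + 1) < z + 1 → bSeq k n = z :=
    fun n z h1 h2 => Int.floor_eq_iff.2 ⟨h1, h2⟩
  have hmem1 : ∀ u v n : ℕ, (u:ℤ) = aSeq k n → (v:ℤ) = bSeq k n → (u, v) ∈ SbarK k :=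
    fun u v n h1 h2 => ⟨n, Or.inl ⟨h1, h2⟩⟩
  have hmem2 : ∀ u v n : ℕ, (u:ℤ) = bSeq k n → (v:ℤ) = aSeq k n → (u, v) ∈ SbarK k :=
    fun u v n h1 h2 => ⟨n, Or.inr ⟨h1, h2⟩⟩
  generalize aSeq k = a at *
  generalize bSeq k = b at *
  generalize alphaK k = α at *
  lift a to ℕ → ℕ using ha0
  lift b to ℕ → ℕ using hb0
  beta_reduce at hmem1 hmem2 hcov hal hau hbl hbu haeq hbeq
  norm_cast at hmem1 hmem2
  simp only [Int.cast_natCast] at hal hau hbl hbu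
  -- steps
  have ha1 : ∀ n, a n + 1 ≤ a (n+1) := by
    intro n
    have h1 := hal n
    have h2 := hau (n+1)
    push_cast at h2
    have : (a n : ℝ) < a (n+1) := by nlinarith
    have : a n < a (n+1) := by exact_mod_cast this
    omega
  have hb1 : ∀ n, b (n+1) ≤ b n + (k + 2) := by
    intro n
    have h1 := hbu n
    have h2 := hbl (n+1)
    push_cast at h2
    have : (b (n+1) : ℝ) < b n + (k+2) + 1 := by nlinarith
    have : b (n+1) < b n + (k+2) + 1 := by exact_mod_cast this
    omega
  have ham : StrictMono a := strictMono_nat_of_lt_succ (fun n => ha1 n)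
  have hab : ∀ n, n + k * a n ≤ b n := by
    intro n
    have h1 := hal n
    have h2 := hbu n
    have : (n:ℝ) + k * a n < b n + 1 := by nlinarith
    have : n + k * a n < b n + 1 := by exact_mod_cast this
    omega
  have hab2 : ∀ n, b n < n + k * a n + k := by
    intro n
    have h1 := hau n
    have h2 := hbl n
    have : (b n:ℝ) < n + k * a n + k := by nlinarith
    exact_mod_cast this
  have hab3 : ∀ n, a n ≤ b n := by
    intro n
    have := hab n
    nlinarith [Nat.zero_le (a n)]
  have hz : a 0 = 0 ∧ b 0 = 0 := by
    have h1 := hal 0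
    have h2 := hbl 0
    simp only [Nat.cast_zero, zero_mul] at h1 h2
    constructor
    · exact_mod_cast le_antisymm h1 (by positivity)
    · exact_mod_cast le_antisymm h2 (by positivity)
  obtain ⟨n, hn | hn⟩ := hcov
  swap
  · have hn : x = b n := by exact_mod_cast hn
    have hne : y ≠ a n := fun h => hp (hmem2 _ _ n hn h)
    have := hab3 n
    exact ⟨(x, a n), Or.inl ⟨y - a n, by omega, Or.inr ⟨rfl, by simp only; omega⟩⟩,
      hmem2 _ _ n hn rfl⟩
  have hn : x = a n := by exact_mod_cast hn
  have hne : y ≠ b n := fun h => hp (hmem1 _ _ n hn h)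
  rcases lt_or_ge (b n) y with hlt | hge
  · exact ⟨(x, b n), Or.inl ⟨y - b n, by omega, Or.inr ⟨rfl, by simp only; omega⟩⟩,
      hmem1 _ _ n hn rfl⟩
  -- the diagonal zone
  have hex : ∃ M, y + a M < b M + x := ⟨n, by omega⟩
  classical
  obtain ⟨M, hM, hmin⟩ : ∃ M, y + a M < b M + x ∧ ∀ m < M, ¬ (y + a m < b m + x) :=
    ⟨Nat.find hex, Nat.find_spec hex, fun m h => Nat.find_min hex h⟩
  have hMn : M ≤ n := by
    by_contra h
    exact hmin n (by omega) (by omega)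
  obtain ⟨m, rfl⟩ : ∃ m, M = m + 1 := by
    refine ⟨M - 1, ?_⟩
    rcases Nat.eq_zero_or_pos M with rfl | h
    · omega
    · omega
  have hm := hmin m (by omega)
  have ham' : a m < a n := ham (by omega)
  have hA := ha1 m
  have hB := hb1 m
  by_cases hcl : y + a m < b m + x + k
  · exact ⟨(a m, b m), Or.inr (Or.inl ⟨x - a m, y - b m, by omega, by omega, by omega, by omega,
      Or.inl ⟨by simp only; omega, by simp only; omega⟩⟩), hmem1 _ _ m rfl rfl⟩
  have hk2 : 2 ≤ k := by
    by_contra hk2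
    have : k = 1 := by omega
    subst this
    have h1 := hab m
    have h2 := hab2 m
    have h3 := hab (m+1)
    have h4 := hab2 (m+1)
    omega
  rcases Nat.lt_or_ge (m+1) n with hlt | hge2
  · have ham2 : a (m+1) < a n := ham hlt
    by_cases hs : x = a (m+1) + 1
    · exact ⟨(a (m+1), y), Or.inl ⟨1, le_rfl, Or.inl ⟨by simp only; omega, rfl⟩⟩,
        hmem1 _ _ (m+1) rfl (by omega)⟩
    · exact ⟨(a (m+1), b (m+1)), Or.inr (Or.inl ⟨x - a (m+1), y - b (m+1), by omega, by omega,
        by omega, by omega, Or.inl ⟨by simp only; omega, by simp only; omega⟩⟩),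
        hmem1 _ _ (m+1) rfl rfl⟩
  have hnm : n = m + 1 := by omega
  subst hnm
  have hy : y + 1 = b (m+1) := by omega
  have hbd : b (m+1) = b m + (k + 2) := by omega
  have had : a (m+1) = a m + 1 := by omega
  obtain ⟨i, hi⟩ : ∃ i, b (m+1) = (m+1) + k * a (m+1) + i := Nat.exists_eq_add_of_le (hab (m+1))
  have hik : i < k := by have := hab2 (m+1); omega
  have hiR : (b (m+1) : ℝ) = ((m+1 : ℕ):ℝ) + k * a (m+1) + i := by exact_mod_cast hi
  have hbdR : (b (m+1) : ℝ) = b m + (k + 2) := by exact_mod_cast hbd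
  have hadR : (a (m+1) : ℝ) = a m + 1 := by exact_mod_cast had
  have hikR : (i:ℝ) + 1 ≤ k := by exact_mod_cast hik
  -- E = k * (n α - a) - i
  have hE0 : 0 ≤ (k:ℝ) * (((m+1 : ℕ):ℝ) * α - a (m+1)) - i := by
    have := hbl (m+1); linarith
  have hE1 : (k:ℝ) * (((m+1 : ℕ):ℝ) * α - a (m+1)) - i < k * (α - 1) := by
    have := hbu m
    push_cast at *; linarith
  have hi1 : 1 ≤ i := by
    by_contra h
    have h0 : i = 0 := by omega
    subst h0
    have h3 := mul_le_mul_of_nonneg_left (hal m) hk'.le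
    have h4 : (k:ℝ) * a (m+1) = k * a m + k := by rw [hadR]; ring
    push_cast at *; linarith
  obtain ⟨j, hj, j1, j2, j3⟩ := hdes i hi1 (m+1) (a (m+1)) (by omega)
    (by rw [Int.cast_natCast]; exact hE0)
    (by rw [Int.cast_natCast]; linarith)
  obtain ⟨R, hR, hR0⟩ := hinv i hik.le j
  have hg1 : 1 ≤ (fg k i j).2 := by omega
  have hmove : ∀ q, (q.1 + (fg k i j).1 = x ∧ q.2 + ((fg k i j).2 - 1) = y) →
      GammaMove k (x, y) q := fun q hq => Or.inr (Or.inr ⟨i, j, hi1, hik, hj, Or.inl hq⟩)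
  generalize (fg k i j).1 = F at *
  generalize (fg k i j).2 = G at *
  subst hR
  have j1' : R ≤ m + 1 := by push_cast at j1; omega
  have j2' : F ≤ a (m+1) := by exact_mod_cast j2
  obtain ⟨N, hN⟩ := Nat.exists_eq_add_of_le j1'
  obtain ⟨A, hA'⟩ := Nat.exists_eq_add_of_le j2'
  have hNR : ((m+1 : ℕ):ℝ) = R + N := by exact_mod_cast hN
  have hAR : (a (m+1) : ℝ) = F + A := by exact_mod_cast hA'
  have hk0 : 0 ≤ (k:ℝ) * (N * α - A) := by
    rw [Int.cast_natCast, hNR, hAR] at j3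
    push_cast at j3
    linarith
  have hk3 : (k:ℝ) * (N * α - A) < 1 := by
    rw [hNR, hAR] at hE1
    linarith
  have h0 : 0 ≤ (N:ℝ) * α - A := nonneg_of_mul_nonneg_right hk0 hk'
  have hAN : a N = A := by
    have := haeq N A (by push_cast; linarith) (by push_cast; nlinarith)
    exact_mod_cast this
  have hBN : b N = N + k * A := by
    have := hbeq N (N + k * A : ℕ) (by push_cast; linarith) (by push_cast; linarith)
    exact_mod_cast this
  refine ⟨(A, N + k * A), hmove _ ⟨by simp only; omega, ?_⟩, hmem1 _ _ N hAN.symm hBN.symm⟩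
  have : k * a (m+1) = k * F + k * A := by rw [hA']; ring
  simp only
  omega

theorem move_N_to_P (k : ℕ) (hk : 1 ≤ k) (p : ℕ × ℕ) (hp : p ∉ SbarK k) :
    ∃ q : ℕ × ℕ, GammaMove k p q ∧ q ∈ SbarK k := by
  obtain ⟨x, y⟩ := p
  rcases le_total x y with h | h
  · exact move_half k hk x y h hp
  · have hp' : (y, x) ∉ SbarK k := by
      rintro ⟨n, h | h⟩
      · exact hp ⟨n, Or.inr ⟨h.2, h.1⟩⟩
      · exact hp ⟨n, Or.inl ⟨h.2, h.1⟩⟩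
    obtain ⟨⟨u, v⟩, hm, n, hq⟩ := move_half k hk y x h hp'
    refine ⟨(v, u), ?_, n, ?_⟩
    · rcases hm with ⟨n, hn, h | h⟩ | ⟨s, t, h1, h2, h3, h4, h | h⟩ | ⟨i, j, h1, h2, h3, h | h⟩
      · exact Or.inl ⟨n, hn, Or.inr ⟨h.2, h.1⟩⟩
      · exact Or.inl ⟨n, hn, Or.inl ⟨h.2, h.1⟩⟩
      · exact Or.inr (Or.inl ⟨s, t, h1, h2, h3, h4, Or.inr ⟨h.2, h.1⟩⟩)
      · exact Or.inr (Or.inl ⟨s, t, h1, h2, h3, h4, Or.inl ⟨h.2, h.1⟩⟩)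
      · exact Or.inr (Or.inr ⟨i, j, h1, h2, h3, Or.inr ⟨h.2, h.1⟩⟩)
      · exact Or.inr (Or.inr ⟨i, j, h1, h2, h3, Or.inl ⟨h.2, h.1⟩⟩)
    · rcases hq with h | h
      · exact Or.inr ⟨h.2, h.1⟩
      · exact Or.inl ⟨h.2, h.1⟩
end
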